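/- For every positive integer k, ∑_{n=1}^{2k-2} (-1)^n * sin(π n² / (4k-3)) = 0. -/

import Mathlib

open Finset Real

/-!
Let `ψ` be a primitive additive character of a finite commutative ring of odd cardinality `q`, and
let `S` be the imaginary part of the unitary Fourier matrix `(ψ (x * y) / √q)`. By orthogonality of
characters `S ^ 2` is the projection onto odd functions, whose trace is `(q - 1) / 2`, and
`S ^ 3 = S`. Hence `(S ^ 2 + S) / 2` is idempotent, its trace is its rank, and so
`tr S + (q - 1) / 2` is an even integer. On the other hand `√q * tr S` is the imaginary part of the
quadratic Gauss sum `∑ x, ψ (x ^ 2)`, whose absolute value is `√q`, so `|tr S| ≤ 1`. If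
`q ≡ 1 [MOD 4]` then `tr S` is an even integer in `[-1, 1]`, that is, `tr S = 0`.

For `q = 2 * N + 1` and `ψ` the standard character of `ZMod q` scaled by `N + 1`, the inverse of
`2`, the imaginary part of `ψ (n ^ 2)` is `(-1) ^ n * sin (π * n ^ 2 / q)`.
-/

section Matrix

variable {ι K : Type*} [Fintype ι] [Field K]

theorem trace_eq_rank_of_isIdempotentElem {A : Matrix ι ι K} (hA : IsIdempotentElem A) :
    A.trace = A.rank := by
  classical
  have hlin : IsIdempotentElem A.toLin' := by
    rw [IsIdempotentElem, Module.End.mul_eq_comp, ← Matrix.toLin'_mul, hA.eq]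
  rw [← Matrix.trace_toLin'_eq, (LinearMap.IsIdempotentElem.isProj_range _ hlin).trace]
  rfl

theorem exists_trace_sq_add_trace_eq_two_mul_of_pow_three_eq [DecidableEq ι]
    [NeZero (2 : K)] {S : Matrix ι ι K} (hS : S ^ 3 = S) :
    ∃ r : ℕ, (S ^ 2).trace + S.trace = 2 * r := by
  have hfour : S ^ 4 = S ^ 2 := by rw [pow_succ, hS, sq]
  have hsquare : (S ^ 2 + S) * (S ^ 2 + S) = (2 : K) • (S ^ 2 + S) := by
    calc (S ^ 2 + S) * (S ^ 2 + S) = S ^ 4 + 2 • S ^ 3 + S ^ 2 := by noncomm_ring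
      _ = (2 : K) • (S ^ 2 + S) := by rw [hfour, hS, two_smul, two_smul]; abel
  have hidem : IsIdempotentElem ((2 : K)⁻¹ • (S ^ 2 + S)) := by
    rw [IsIdempotentElem, smul_mul_smul_comm, hsquare, smul_smul,
      inv_mul_cancel_right₀ (NeZero.ne (2 : K))]
  refine ⟨((2 : K)⁻¹ • (S ^ 2 + S)).rank, ?_⟩
  rw [← trace_eq_rank_of_isIdempotentElem hidem, Matrix.trace_smul, smul_eq_mul,
    mul_inv_cancel_left₀ (NeZero.ne (2 : K)), Matrix.trace_add]

end Matrix

theorem isUnit_two_of_odd_card {R : Type*} [Ring R] [Fintype R] (h : Odd (Fintype.card R)) :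
    IsUnit (2 : R) := by
  obtain ⟨N, hN⟩ := h
  have hcard : (2 : R) * N + 1 = 0 := by
    exact_mod_cast (congrArg (Nat.cast : ℕ → R) hN).symm.trans (Nat.cast_card_eq_zero R)
  exact .of_mul_eq_one (-N : R) (by rw [mul_neg, neg_eq_of_add_eq_zero_right hcard])

theorem isPrimitive_mulShift_of_isUnit {R M : Type*} [CommRing R] [CommMonoid M] {ψ : AddChar R M}
    (hψ : ψ.IsPrimitive) {u : R} (hu : IsUnit u) : (ψ.mulShift u).IsPrimitive := by
  intro a ha
  rw [AddChar.mulShift_mulShift]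
  exact hψ (hu.mul_right_eq_zero.not.mpr ha)

section QuadraticGaussSum

variable {R : Type*} [CommRing R] [Fintype R]

/-- The quadratic Gauss sum of an additive character `ψ`, in the form `∑ ψ (x ^ 2)`, which is
meaningful over any finite commutative ring (no quadratic character is involved). -/
def quadraticGaussSum {R' : Type*} [CommSemiring R'] (ψ : AddChar R R') : R' := ∑ x, ψ (x ^ 2)

theorem quadraticGaussSum_mul_quadraticGaussSum_inv {R' : Type*} [CommRing R'] [IsDomain R']
    {ψ : AddChar R R'} (hψ : ψ.IsPrimitive) (h2 : IsUnit (2 : R)) :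
    quadraticGaussSum ψ * quadraticGaussSum ψ⁻¹ = Fintype.card R := by
  classical
  calc quadraticGaussSum ψ * quadraticGaussSum ψ⁻¹
      = ∑ y, ∑ x, ψ (x ^ 2 - y ^ 2) := by
        simp only [quadraticGaussSum, sum_mul_sum, AddChar.inv_apply, ← AddChar.map_add_eq_mul,
          ← sub_eq_add_neg]
        exact sum_comm
    _ = ∑ y, ∑ d, ψ ((d + y) ^ 2 - y ^ 2) :=
        sum_congr rfl fun y _ =>
          (Equiv.sum_comp (Equiv.addRight y) fun x => ψ (x ^ 2 - y ^ 2)).symm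
    _ = ∑ d, ψ (d ^ 2) * ∑ y, ψ (y * (2 * d)) := by
        rw [sum_comm]
        simp only [mul_sum, ← AddChar.map_add_eq_mul]
        refine sum_congr rfl fun d _ => sum_congr rfl fun y _ => congrArg ψ ?_
        ring
    _ = Fintype.card R := by
        simp [AddChar.sum_mulShift _ hψ, h2.mul_right_eq_zero]

theorem norm_quadraticGaussSum_sq {ψ : AddChar R ℂ} (hψ : ψ.IsPrimitive) (h2 : IsUnit (2 : R)) :
    ‖quadraticGaussSum ψ‖ ^ 2 = Fintype.card R := by
  have hconj : (starRingEnd ℂ) (quadraticGaussSum ψ) = quadraticGaussSum ψ⁻¹ := by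
    simp only [quadraticGaussSum, map_sum, AddChar.inv_apply, AddChar.map_neg_eq_conj]
  have hmul := quadraticGaussSum_mul_quadraticGaussSum_inv hψ h2
  rw [← hconj, Complex.mul_conj'] at hmul
  exact_mod_cast hmul

/-- The imaginary part of the unitary Fourier matrix of the finite ring `R` with respect to the
additive character `ψ`: its entries are the sines of the arguments of `ψ (x * y)`, normalised
by `√(card R)`. -/
noncomputable def sineMatrix (ψ : AddChar R ℂ) : Matrix R R ℝ :=
  Matrix.of fun x y => (ψ (x * y)).im / √(Fintype.card R)

theorem sineMatrix_neg_left (ψ : AddChar R ℂ) (x y : R) :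
    sineMatrix ψ (-x) y = -sineMatrix ψ x y := by
  simp [sineMatrix, AddChar.map_neg_eq_conj, neg_div]

theorem trace_sineMatrix (ψ : AddChar R ℂ) :
    (sineMatrix ψ).trace = (quadraticGaussSum ψ).im / √(Fintype.card R) := by
  simp [sineMatrix, Matrix.trace, quadraticGaussSum, sum_div, sq]

theorem abs_trace_sineMatrix_le_one {ψ : AddChar R ℂ} (hψ : ψ.IsPrimitive)
    (h2 : IsUnit (2 : R)) : |(sineMatrix ψ).trace| ≤ 1 := by
  have hnorm : √(Fintype.card R) = ‖quadraticGaussSum ψ‖ := by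
    rw [← norm_quadraticGaussSum_sq hψ h2, sqrt_sq (norm_nonneg _)]
  rw [trace_sineMatrix, abs_div, hnorm, abs_norm]
  exact div_le_one_of_le₀ (Complex.abs_im_le_norm _) (norm_nonneg _)

section DecidableEq

variable [DecidableEq R]

theorem sum_im_mul_im {ψ : AddChar R ℂ} (hψ : ψ.IsPrimitive) (x z : R) :
    ∑ y, (ψ (x * y)).im * (ψ (y * z)).im =
      Fintype.card R * (((if x = z then 1 else 0) - if -x = z then 1 else 0) / 2) := by
  have hprod (y : R) : (ψ (x * y)).im * (ψ (y * z)).im =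
      ((ψ (y * (x - z))).re - (ψ (y * (x + z))).re) / 2 := by
    rw [show y * (x - z) = x * y + -(y * z) by ring, show y * (x + z) = x * y + y * z by ring]
    simp only [AddChar.map_add_eq_mul, AddChar.map_neg_eq_conj, Complex.mul_re, Complex.conj_re,
      Complex.conj_im]
    ring
  have horth (b : R) : ∑ y, (ψ (y * b)).re = if b = 0 then (Fintype.card R : ℝ) else 0 := by
    rw [← Complex.re_sum, AddChar.sum_mulShift b hψ]
    split_ifs <;> simp
  simp only [hprod, ← sum_div, sum_sub_distrib, horth, sub_eq_zero, ← neg_eq_iff_add_eq_zero]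
  split_ifs <;> ring

theorem sineMatrix_sq_apply {ψ : AddChar R ℂ} (hψ : ψ.IsPrimitive) (x z : R) :
    (sineMatrix ψ ^ 2) x z = ((if x = z then 1 else 0) - if -x = z then 1 else 0) / 2 := by
  have hcard : (Fintype.card R : ℝ) ≠ 0 := Nat.cast_ne_zero.mpr Fintype.card_ne_zero
  simp only [sq, Matrix.mul_apply, sineMatrix, Matrix.of_apply, div_mul_div_comm,
    mul_self_sqrt (Nat.cast_nonneg _), ← sum_div, sum_im_mul_im hψ]
  exact mul_div_cancel_left₀ _ hcard

theorem sineMatrix_pow_three {ψ : AddChar R ℂ} (hψ : ψ.IsPrimitive) :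
    sineMatrix ψ ^ 3 = sineMatrix ψ := by
  ext x z
  rw [pow_succ, Matrix.mul_apply]
  simp only [sineMatrix_sq_apply hψ, div_mul_eq_mul_div, sub_mul, ite_mul, one_mul, zero_mul,
    ← sum_div, sum_sub_distrib, sum_ite_eq, mem_univ, if_true, sineMatrix_neg_left]
  ring

theorem trace_sineMatrix_sq {ψ : AddChar R ℂ} (hψ : ψ.IsPrimitive) (h2 : IsUnit (2 : R)) :
    (sineMatrix ψ ^ 2).trace = (Fintype.card R - 1) / 2 := by
  have hself (x : R) : -x = x ↔ x = 0 := by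
    rw [neg_eq_iff_add_eq_zero, ← two_mul, h2.mul_right_eq_zero]
  simp [Matrix.trace, sineMatrix_sq_apply hψ, hself, ← sum_div]

end DecidableEq

theorem im_quadraticGaussSum_eq_zero_of_card_mod_four_eq_one {ψ : AddChar R ℂ}
    (hψ : ψ.IsPrimitive) (hcard : Fintype.card R % 4 = 1) : (quadraticGaussSum ψ).im = 0 := by
  classical
  have h2 : IsUnit (2 : R) := isUnit_two_of_odd_card (Nat.odd_iff.mpr (by lia))
  obtain ⟨r, hr⟩ := exists_trace_sq_add_trace_eq_two_mul_of_pow_three_eq (sineMatrix_pow_three hψ)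
  obtain ⟨j, hj⟩ : ∃ j, Fintype.card R = 4 * j + 1 := ⟨Fintype.card R / 4, by lia⟩
  have heven : (sineMatrix ψ).trace = (2 * (r - j) : ℤ) := by
    rw [trace_sineMatrix_sq hψ h2, hj] at hr
    push_cast at hr ⊢
    linarith
  have hbound : |2 * (r - j : ℤ)| ≤ 1 := by
    exact_mod_cast heven ▸ abs_trace_sineMatrix_le_one hψ h2
  have htrace : (sineMatrix ψ).trace = 0 := by
    rw [heven, show 2 * (r - j : ℤ) = 0 by rw [abs_le] at hbound; lia, Int.cast_zero]
  have hcard_pos : 0 < (Fintype.card R : ℝ) := Nat.cast_pos.mpr Fintype.card_pos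
  rw [trace_sineMatrix] at htrace
  exact (div_eq_zero_iff.mp htrace).resolve_right (sqrt_pos.mpr hcard_pos).ne'

end QuadraticGaussSum

theorem sum_zmod_eq_add_two_nsmul_sum_Icc_of_even {M : Type*} [AddCommMonoid M] (N : ℕ)
    {f : ZMod (2 * N + 1) → M} (hf : f.Even) :
    ∑ x, f x = f 0 + 2 • ∑ n ∈ Icc 1 N, f n := by
  have hrange : ∑ x, f x = ∑ n ∈ range (2 * N + 1), f n := by
    rw [← Fin.sum_univ_eq_sum_range]
    exact sum_congr rfl fun x _ => congrArg f (ZMod.natCast_zmod_val x).symm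
  have hreflect : ∑ n ∈ Ico (N + 1) (2 * N + 1), f n = ∑ n ∈ Ico 1 (N + 1), f n := by
    have hsymm (n : ℕ) (hn : n ∈ Ico 1 (N + 1)) : f (2 * N + 1 - n : ℕ) = f n := by
      rw [Nat.cast_sub (by grind), ZMod.natCast_self, zero_sub, hf]
    rw [← sum_congr rfl hsymm, sum_Ico_reflect (fun n : ℕ => f n) 1 (by lia)]
    congr 2
    lia
  rw [hrange, range_eq_Ico, sum_eq_sum_Ico_succ_bot (by lia), zero_add, Nat.cast_zero,
    ← sum_Ico_consecutive (fun n : ℕ => f n) (by lia : 1 ≤ N + 1) (by lia), hreflect, two_nsmul]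
  rfl

theorem im_stdAddChar_mulShift_sq (N n : ℕ) :
    (ZMod.stdAddChar.mulShift (N + 1 : ZMod (2 * N + 1)) (n ^ 2)).im =
      (-1) ^ n * sin (π * n ^ 2 / (2 * N + 1)) := by
  have hangle : 2 * π * Complex.I * (((N + 1) * n ^ 2 : ℤ) : ℂ) / ((2 * N + 1 : ℕ) : ℂ) =
      ((π * n ^ 2 / (2 * N + 1) + (n ^ 2 : ℕ) * π : ℝ) : ℂ) * Complex.I := by
    have hN : (2 * N + 1 : ℂ) ≠ 0 := by exact_mod_cast (2 * N).succ_ne_zero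
    push_cast
    field_simp
    ring
  have hvalue : ZMod.stdAddChar.mulShift (N + 1 : ZMod (2 * N + 1)) (n ^ 2) =
      Complex.exp (((π * n ^ 2 / (2 * N + 1) + (n ^ 2 : ℕ) * π : ℝ) : ℂ) * Complex.I) := by
    rw [← hangle, ← ZMod.stdAddChar_coe, AddChar.mulShift_apply]
    push_cast
    rfl
  rw [hvalue, Complex.exp_ofReal_mul_I_im, sin_add_nat_mul_pi,
    neg_one_pow_congr (Nat.even_pow' two_ne_zero)]

theorem sum_neg_one_pow_mul_sin_eq_zero_of_even {N : ℕ} (hN : Even N) :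
    ∑ n ∈ Icc 1 N, (-1) ^ n * sin (π * n ^ 2 / (2 * N + 1)) = 0 := by
  let ψ : AddChar (ZMod (2 * N + 1)) ℂ := ZMod.stdAddChar.mulShift (N + 1)
  have hunit : IsUnit (N + 1 : ZMod (2 * N + 1)) := by
    have hzero : (2 * N + 1 : ZMod (2 * N + 1)) = 0 := by
      exact_mod_cast ZMod.natCast_self (2 * N + 1)
    exact .of_mul_eq_one 2 (by linear_combination hzero)
  have hψ : ψ.IsPrimitive := isPrimitive_mulShift_of_isUnit (ZMod.isPrimitive_stdAddChar _) hunit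
  have hcard : Fintype.card (ZMod (2 * N + 1)) % 4 = 1 := by
    rw [ZMod.card]
    grind
  have hsum := im_quadraticGaussSum_eq_zero_of_card_mod_four_eq_one hψ hcard
  have heven : (fun x => (ψ (x ^ 2)).im).Even := fun x => by simp only [neg_sq]
  rw [quadraticGaussSum, Complex.im_sum, sum_zmod_eq_add_two_nsmul_sum_Icc_of_even N heven] at hsum
  simp only [ψ, im_stdAddChar_mulShift_sq] at hsum
  simpa using hsum

theorem alternating_sine_sum_4k_sub_three (k : ℕ) (hk : 0 < k) :
    ∑ n ∈ Finset.Icc 1 (2 * k - 2), (-1 : ℝ) ^ n *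
        Real.sin (π * (n : ℝ) ^ 2 / (4 * (k : ℝ) - 3)) = 0 := by
  obtain ⟨j, rfl⟩ := Nat.exists_eq_add_of_le' hk
  have hden : 4 * ((j + 1 : ℕ) : ℝ) - 3 = 2 * (2 * j : ℕ) + 1 := by push_cast; ring
  rw [hden, show 2 * (j + 1) - 2 = 2 * j by lia]
  exact sum_neg_one_pow_mul_sin_eq_zero_of_even (even_two_mul j)
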